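/- arXiv:cond-mat/0112045 — 2 statements merged into one kernel-verified Lean document; each statement's English description precedes it below -/
import Mathlib

section
/- (Theorem 1.) In the CreditRisk⁺ model, for every i = 1,…,n and every real z with 0 < z < ρ_g, the function f_i(z) = E_α[N_i z^L] = Σ_{l=0}^∞ E_α[N_i 1_{L = l}] z^l converges and satisfies f_i(z) = z^{ν_i} g_α(z) (S₀ r_{0,i} + Σ_{j=1}^k α_j β_j r_{j,i} / (1 + β_j − β_j Σ_{h=1}^n r_{j,h} z^{ν_h})), where g_α(z) = E_α[z^L]. -/
open MeasureTheory ProbabilityTheory Real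

noncomputable section

/-- The gamma measure is sigma-finite (needed to form product measures). -/
instance gammaMeasure.instSigmaFinite (a r : ℝ) :
    SigmaFinite (gammaMeasure a r) := by
  unfold ProbabilityTheory.gammaMeasure ProbabilityTheory.gammaPDF
  infer_instance

/-- Conditional Poisson intensity `R_i(s) = r_{0,i} S_0 + sum_j r_{j,i} s_j`. -/
def crpR {n k : ℕ} (S0 : ℝ) (r0 : Fin n → ℝ) (r : Fin k → Fin n → ℝ)
    (s : Fin k → ℝ) (i : Fin n) : ℝ :=
  r0 i * S0 + ∑ j, r j i * s j

/-- The CreditRisk⁺ measure `P_α` on `(Fin k → ℝ) × (Fin n → ℕ)`: the product of the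
Gamma factor measures (shape `α j`, scale `β j`, i.e. rate `(β j)⁻¹`), composed with the
kernel sending the factor vector `s` to the product of Poisson measures with means `R_i(s)`,
recorded jointly with `s`. -/
def crpMeasure {n k : ℕ} (S0 : ℝ) (r0 : Fin n → ℝ) (r : Fin k → Fin n → ℝ)
    (α β : Fin k → ℝ) : Measure ((Fin k → ℝ) × (Fin n → ℕ)) :=
  (Measure.pi fun j => gammaMeasure (α j) (β j)⁻¹).bind fun s =>
    (Measure.pi fun i => poissonMeasure (crpR S0 r0 r s i).toNNReal).map fun x => (s, x)

/-- Portfolio loss `L = ∑ ν_i N_i`. -/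
def crpLoss {n k : ℕ} (ν : Fin n → ℕ) (x : (Fin k → ℝ) × (Fin n → ℕ)) : ℕ :=
  ∑ i, ν i * x.2 i

/-- Value-at-risk of the ℕ-valued loss `L` at level `δ`: the smallest `l` with
`P[L ≤ l] ≥ δ` (a natural number since `L` is ℕ-valued). -/
def crpVaR {n k : ℕ} (P : Measure ((Fin k → ℝ) × (Fin n → ℕ)))
    (ν : Fin n → ℕ) (δ : ℝ) : ℕ :=
  sInf {l : ℕ | ENNReal.ofReal δ ≤ P {x | crpLoss ν x ≤ l}}

/-- `ρ_g`, the radius of convergence of the probability generating function. -/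
def crpRadius {n k : ℕ} (ν : Fin n → ℕ) (r : Fin k → Fin n → ℝ) (β : Fin k → ℝ) : ℝ :=
  sSup {z : ℝ | 0 < z ∧ ∀ j, ∑ i, r j i * z ^ ν i < 1 + (β j)⁻¹}

/-! Given the factors `S`, the counts are independent Poisson, and the size-biasing identity
`E[N wᴺ] = ρ w E[wᴺ]` for a Poisson variable of mean `ρ` turns the weight `N_i` into
`z ^ ν_i R_i(S)`, which is affine in `S`. The conditional expectation of `z ^ L` is a constant times
`exp (∑ c_j S_j)` with `c_j = ∑ h, r_{j,h} (z ^ ν_h - 1)`. Tilting by `exp (c_j x)` maps the gamma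
law of scale `β_j` to that of scale `β_j / (1 - β_j c_j)`, and `z < ρ_g` makes this positive, so
under the tilted law `S_j` has mean `α_j β_j / (1 - β_j c_j)`. -/

open scoped NNReal

section ProductMeasure

lemma mul_prod_eq_prod_update {ι M : Type*} [Fintype ι] [DecidableEq ι] [CommMonoid M]
    {E : ι → Type*} (f : ∀ l, E l → M) (j : ι) (g : E j → M) (x : ∀ l, E l) :
    g (x j) * ∏ l, f l (x l) =
      ∏ l, Function.update f j (fun y => g y * f j y) l (x l) := by
  simp only [Function.apply_update fun l (φ : E l → M) => φ (x l),
    Finset.prod_update_of_mem (Finset.mem_univ j), mul_assoc, Finset.sdiff_singleton_eq_erase]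
  rw [Finset.mul_prod_erase _ (fun l => f l (x l)) (Finset.mem_univ j)]

variable {ι 𝕜 : Type*} [Fintype ι] [RCLike 𝕜] {E : ι → Type*} [∀ l, MeasurableSpace (E l)]
  {μ : ∀ l, Measure (E l)} [∀ l, SigmaFinite (μ l)] {f : ∀ l, E l → 𝕜} {j : ι}
  {g : E j → 𝕜}

lemma integrable_eval_mul_prod (hf : ∀ l, Integrable (f l) (μ l))
    (hg : Integrable (fun y => g y * f j y) (μ j)) :
    Integrable (fun x => g (x j) * ∏ l, f l (x l)) (Measure.pi μ) := by
  classical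
  simp only [mul_prod_eq_prod_update f j g]
  refine Integrable.fintype_prod_dep fun l => ?_
  obtain rfl | hl := eq_or_ne l j
  · simpa only [Function.update_self] using hg
  · simpa only [Function.update_of_ne hl] using hf l

lemma integral_eval_mul_prod_of_integral_mul_eq {d : 𝕜}
    (hd : ∫ y, g y * f j y ∂μ j = d * ∫ y, f j y ∂μ j) :
    ∫ x, g (x j) * ∏ l, f l (x l) ∂Measure.pi μ = d * ∫ x, ∏ l, f l (x l) ∂Measure.pi μ := by
  classical
  simp only [mul_prod_eq_prod_update f j g]
  rw [integral_fintype_prod_eq_prod, integral_fintype_prod_eq_prod]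
  simp only [Function.apply_update fun l (φ : E l → 𝕜) => ∫ y, φ y ∂μ l,
    Finset.prod_update_of_mem (Finset.mem_univ j), hd, mul_assoc, Finset.sdiff_singleton_eq_erase]
  rw [Finset.mul_prod_erase _ (fun l => ∫ y, f l y ∂μ l) (Finset.mem_univ j)]

end ProductMeasure

section PoissonMeasure

lemma hasSum_poisson_weight_mul_pow (ρ : ℝ≥0) (w : ℝ) :
    HasSum (fun m : ℕ => exp (-ρ) * ρ ^ m / m.factorial * w ^ m) (exp (ρ * (w - 1))) := by
  convert! (NormedSpace.expSeries_div_hasSum_exp ((ρ : ℝ) * w)).mul_left (exp (-ρ)) using 1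
  · funext m
    rw [mul_pow]
    ring
  · rw [← exp_eq_exp_ℝ, ← exp_add]
    ring_nf

lemma integrable_pow_poissonMeasure (ρ : ℝ≥0) (w : ℝ) :
    Integrable (fun m : ℕ => w ^ m) (poissonMeasure ρ) := by
  simpa only [integrable_poissonMeasure_iff, norm_pow]
    using (hasSum_poisson_weight_mul_pow ρ ‖w‖).summable

lemma integral_pow_poissonMeasure (ρ : ℝ≥0) (w : ℝ) :
    ∫ m : ℕ, w ^ m ∂poissonMeasure ρ = exp (ρ * (w - 1)) := by
  rw [integral_poissonMeasure]
  exact (hasSum_poisson_weight_mul_pow ρ w).tsum_eq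

lemma poisson_weight_succ_mul (ρ : ℝ≥0) (m : ℕ) :
    exp (-ρ) * ρ ^ (m + 1) / (m + 1).factorial * ((m + 1 : ℕ) : ℝ) =
      ρ * (exp (-ρ) * ρ ^ m / m.factorial) := by
  rw [Nat.factorial_succ]
  push_cast
  field_simp
  ring

lemma integrable_natCast_mul_poissonMeasure {ρ : ℝ≥0} {f : ℕ → ℝ}
    (hf : Integrable (fun m => f (m + 1)) (poissonMeasure ρ)) :
    Integrable (fun m : ℕ => (m : ℝ) * f m) (poissonMeasure ρ) := by
  rw [integrable_poissonMeasure_iff] at hf ⊢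
  rw [← summable_nat_add_iff 1]
  refine (hf.mul_left (ρ : ℝ)).congr fun m => ?_
  rw [norm_mul, RCLike.norm_natCast, ← mul_assoc, ← mul_assoc, poisson_weight_succ_mul]

lemma integral_natCast_mul_poissonMeasure {ρ : ℝ≥0} {f : ℕ → ℝ}
    (hf : Integrable (fun m => f (m + 1)) (poissonMeasure ρ)) :
    ∫ m : ℕ, (m : ℝ) * f m ∂poissonMeasure ρ = ρ * ∫ m, f (m + 1) ∂poissonMeasure ρ := by
  have hsum := (hasSum_integral_poissonMeasure (integrable_natCast_mul_poissonMeasure hf)).summable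
  rw [integral_poissonMeasure, hsum.tsum_eq_zero_add, integral_poissonMeasure, ← tsum_mul_left]
  simp only [smul_eq_mul, Nat.cast_zero, zero_mul, mul_zero, zero_add, ← mul_assoc,
    poisson_weight_succ_mul]

lemma integrable_natCast_mul_pow_poissonMeasure (ρ : ℝ≥0) (w : ℝ) :
    Integrable (fun m : ℕ => (m : ℝ) * w ^ m) (poissonMeasure ρ) :=
  integrable_natCast_mul_poissonMeasure <| by
    simpa only [pow_succ] using (integrable_pow_poissonMeasure ρ w).mul_const w

lemma integral_natCast_mul_pow_poissonMeasure (ρ : ℝ≥0) (w : ℝ) :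
    ∫ m : ℕ, (m : ℝ) * w ^ m ∂poissonMeasure ρ = ρ * w * ∫ m : ℕ, w ^ m ∂poissonMeasure ρ := by
  rw [integral_natCast_mul_poissonMeasure]
  · simp only [pow_succ', integral_const_mul, mul_assoc]
  · simpa only [pow_succ] using (integrable_pow_poissonMeasure ρ w).mul_const w

end PoissonMeasure

section GammaMeasure

variable {a b c : ℝ}

lemma measurable_gammaPDF (a b : ℝ) : Measurable (gammaPDF a b) :=
  (measurable_gammaPDFReal a b).ennreal_ofReal

lemma ae_nonneg_gammaMeasure (a b : ℝ) : ∀ᵐ x ∂gammaMeasure a b, 0 ≤ x := by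
  rw [gammaMeasure, ae_withDensity_iff (measurable_gammaPDF a b)]
  exact ae_of_all _ fun x hx => not_lt.1 fun h => hx (gammaPDF_of_neg h)

lemma integrable_gammaMeasure_iff (ha : 0 < a) (hb : 0 < b) {f : ℝ → ℝ} :
    Integrable f (gammaMeasure a b) ↔ Integrable fun x => gammaPDFReal a b x * f x := by
  rw [gammaMeasure, integrable_withDensity_iff_integrable_smul'
    (measurable_gammaPDF a b) (ae_of_all _ fun _ => ENNReal.ofReal_lt_top)]
  simp only [gammaPDF, ENNReal.toReal_ofReal (gammaPDFReal_nonneg ha hb _), smul_eq_mul]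

lemma integral_gammaMeasure (ha : 0 < a) (hb : 0 < b) (f : ℝ → ℝ) :
    ∫ x, f x ∂gammaMeasure a b = ∫ x, gammaPDFReal a b x * f x := by
  rw [gammaMeasure, integral_withDensity_eq_integral_toReal_smul
    (measurable_gammaPDF a b) (ae_of_all _ fun _ => ENNReal.ofReal_lt_top)]
  simp only [gammaPDF, ENNReal.toReal_ofReal (gammaPDFReal_nonneg ha hb _), smul_eq_mul]

lemma gammaPDFReal_mul_exp (hb : 0 < b) (hc : c < b) (x : ℝ) :
    gammaPDFReal a b x * exp (c * x) = (b / (b - c)) ^ a * gammaPDFReal a (b - c) x := by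
  have hbc : 0 < b - c := sub_pos.2 hc
  unfold gammaPDFReal
  split_ifs with hx
  · have hpow : (b / (b - c)) ^ a * (b - c) ^ a = b ^ a := by
      rw [← mul_rpow (by positivity) hbc.le, div_mul_cancel₀ _ hbc.ne']
    rw [← hpow, mul_assoc _ (exp _), ← exp_add]
    ring_nf
  · simp only [zero_mul, mul_zero]

lemma gammaPDFReal_mul_self (ha : 0 < a) (hb : 0 < b) (x : ℝ) :
    gammaPDFReal a b x * x = a / b * gammaPDFReal (a + 1) b x := by
  unfold gammaPDFReal
  split_ifs with hx
  · have hpow : x ^ (a + 1 - 1) = x ^ (a - 1) * x := by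
      rw [← rpow_add_one' hx (by linarith)]
      ring_nf
    rw [hpow, Gamma_add_one ha.ne', rpow_add_one hb.ne']
    field_simp
  · simp only [zero_mul, mul_zero]

lemma integrable_exp_gammaMeasure (ha : 0 < a) (hb : 0 < b) (hc : c < b) :
    Integrable (fun x => exp (c * x)) (gammaMeasure a b) := by
  have hbc : 0 < b - c := sub_pos.2 hc
  have := isProbabilityMeasure_gammaMeasure ha hbc
  have hpdf : Integrable (gammaPDFReal a (b - c)) := by
    simpa only [mul_one] using
      (integrable_gammaMeasure_iff ha hbc).1 (integrable_const (1 : ℝ))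
  simpa only [integrable_gammaMeasure_iff ha hb, gammaPDFReal_mul_exp hb hc]
    using hpdf.const_mul _

lemma integral_exp_gammaMeasure (ha : 0 < a) (hb : 0 < b) (hc : c < b) :
    ∫ x, exp (c * x) ∂gammaMeasure a b = (b / (b - c)) ^ a := by
  have hbc : 0 < b - c := sub_pos.2 hc
  have := isProbabilityMeasure_gammaMeasure ha hbc
  have hpdf : ∫ x, gammaPDFReal a (b - c) x = 1 := by
    simpa using (integral_gammaMeasure ha hbc fun _ => 1).symm
  simp only [integral_gammaMeasure ha hb, gammaPDFReal_mul_exp hb hc, integral_const_mul, hpdf,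
    mul_one]

lemma integrable_mul_exp_gammaMeasure (ha : 0 < a) (hb : 0 < b) (hc : c < b) :
    Integrable (fun x => x * exp (c * x)) (gammaMeasure a b) := by
  have ha' : 0 < a + 1 := by positivity
  have hshift := (integrable_gammaMeasure_iff ha' hb).1 (integrable_exp_gammaMeasure ha' hb hc)
  simpa only [integrable_gammaMeasure_iff ha hb, ← mul_assoc, gammaPDFReal_mul_self ha hb]
    using hshift.const_mul (a / b)

lemma integral_mul_exp_gammaMeasure (ha : 0 < a) (hb : 0 < b) (hc : c < b) :
    ∫ x, x * exp (c * x) ∂gammaMeasure a b =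
      a / (b - c) * ∫ x, exp (c * x) ∂gammaMeasure a b := by
  have ha' : 0 < a + 1 := by positivity
  have hbc : 0 < b - c := sub_pos.2 hc
  calc ∫ x, x * exp (c * x) ∂gammaMeasure a b
      = a / b * ∫ x, exp (c * x) ∂gammaMeasure (a + 1) b := by
        simp only [integral_gammaMeasure ha hb, integral_gammaMeasure ha' hb, ← mul_assoc,
          gammaPDFReal_mul_self ha hb]
        simp only [mul_assoc, integral_const_mul]
    _ = a / (b - c) * ∫ x, exp (c * x) ∂gammaMeasure a b := by
        rw [integral_exp_gammaMeasure ha' hb hc, integral_exp_gammaMeasure ha hb hc,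
          rpow_add_one (by positivity)]
        field_simp

variable {ι : Type*} [Fintype ι] {a b c : ι → ℝ}

lemma integrable_exp_sum_pi_gammaMeasure (ha : ∀ j, 0 < a j) (hb : ∀ j, 0 < b j)
    (hc : ∀ j, c j < b j) :
    Integrable (fun x : ι → ℝ => exp (∑ j, c j * x j))
      (Measure.pi fun j => gammaMeasure (a j) (b j)) := by
  simp only [exp_sum]
  exact Integrable.fintype_prod fun j => integrable_exp_gammaMeasure (ha j) (hb j) (hc j)

lemma integrable_eval_mul_exp_sum_pi_gammaMeasure (ha : ∀ j, 0 < a j) (hb : ∀ j, 0 < b j)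
    (hc : ∀ j, c j < b j) (j : ι) :
    Integrable (fun x : ι → ℝ => x j * exp (∑ l, c l * x l))
      (Measure.pi fun l => gammaMeasure (a l) (b l)) := by
  simp only [exp_sum]
  exact integrable_eval_mul_prod (f := fun l y => exp (c l * y)) (g := fun y => y)
    (fun l => integrable_exp_gammaMeasure (ha l) (hb l) (hc l))
    (integrable_mul_exp_gammaMeasure (ha j) (hb j) (hc j))

lemma integral_eval_mul_exp_sum_pi_gammaMeasure {j : ι} (ha : 0 < a j) (hb : 0 < b j)
    (hc : c j < b j) :
    ∫ x : ι → ℝ, x j * exp (∑ l, c l * x l) ∂Measure.pi (fun l => gammaMeasure (a l) (b l)) =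
      a j / (b j - c j) *
        ∫ x : ι → ℝ, exp (∑ l, c l * x l) ∂Measure.pi fun l => gammaMeasure (a l) (b l) := by
  simp only [exp_sum]
  exact integral_eval_mul_prod_of_integral_mul_eq (f := fun l y => exp (c l * y))
    (g := fun y => y) (integral_mul_exp_gammaMeasure ha hb hc)

lemma integrable_affine_mul_exp_sum_pi_gammaMeasure (ha : ∀ j, 0 < a j) (hb : ∀ j, 0 < b j)
    (hc : ∀ j, c j < b j) (d : ℝ) (t : ι → ℝ) :
    Integrable (fun x : ι → ℝ => (d + ∑ j, t j * x j) * exp (∑ j, c j * x j))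
      (Measure.pi fun j => gammaMeasure (a j) (b j)) := by
  simp only [add_mul, Finset.sum_mul, mul_assoc]
  exact ((integrable_exp_sum_pi_gammaMeasure ha hb hc).const_mul d).add <|
    integrable_finsetSum _ fun j _ =>
      (integrable_eval_mul_exp_sum_pi_gammaMeasure ha hb hc j).const_mul (t j)

lemma integral_affine_mul_exp_sum_pi_gammaMeasure (ha : ∀ j, 0 < a j) (hb : ∀ j, 0 < b j)
    (hc : ∀ j, c j < b j) (d : ℝ) (t : ι → ℝ) :
    ∫ x : ι → ℝ, (d + ∑ j, t j * x j) * exp (∑ j, c j * x j)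
        ∂Measure.pi (fun j => gammaMeasure (a j) (b j)) =
      (d + ∑ j, t j * (a j / (b j - c j))) *
        ∫ x : ι → ℝ, exp (∑ j, c j * x j) ∂Measure.pi fun j => gammaMeasure (a j) (b j) := by
  have hterm j := (integrable_eval_mul_exp_sum_pi_gammaMeasure ha hb hc j).const_mul (t j)
  simp only [add_mul, Finset.sum_mul, mul_assoc]
  rw [integral_add ((integrable_exp_sum_pi_gammaMeasure ha hb hc).const_mul d)
    (integrable_finsetSum _ fun j _ => hterm j), integral_finsetSum _ fun j _ => hterm j]
  simp only [integral_const_mul,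
    integral_eval_mul_exp_sum_pi_gammaMeasure (ha _) (hb _) (hc _)]

end GammaMeasure

section Disintegration

variable {Ω Ω' : Type*} [MeasurableSpace Ω] [MeasurableSpace Ω']

lemma measurable_of_measurable_measure_singleton [Countable Ω'] [MeasurableSingletonClass Ω']
    {κ : Ω → Measure Ω'} (hκ : ∀ y, Measurable fun s => κ s {y}) : Measurable κ := by
  refine Measure.measurable_of_measurable_coe _ fun A hA => ?_
  simp only [← Measure.tsum_indicator_apply_singleton _ A hA]
  refine Measurable.tsum fun y => ?_
  by_cases hy : y ∈ A
  · simpa only [Set.indicator_of_mem hy] using hκ y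
  · simp only [Set.indicator_of_notMem hy, measurable_const]

lemma integrable_compProd_of_nonneg {μ : Measure Ω} [SFinite μ] {κ : Kernel Ω Ω'}
    [IsSFiniteKernel κ] {f : Ω × Ω' → ℝ} (hf : AEStronglyMeasurable f (μ ⊗ₘ κ))
    (hf0 : ∀ x, 0 ≤ f x) (hcond : ∀ᵐ s ∂μ, Integrable (fun y => f (s, y)) (κ s))
    (hint : Integrable (fun s => ∫ y, f (s, y) ∂κ s) μ) : Integrable f (μ ⊗ₘ κ) := by
  refine (Measure.integrable_compProd_iff hf).2 ⟨hcond, ?_⟩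
  simpa only [norm_of_nonneg (hf0 _)] using hint

lemma hasSum_setIntegral_fiber_mul_pow {μ : Measure Ω} {L : Ω → ℕ} (hL : Measurable L)
    {f : Ω → ℝ} {z : ℝ} (hint : Integrable (fun x => f x * z ^ L x) μ) :
    HasSum (fun l : ℕ => (∫ x in {y | L y = l}, f x ∂μ) * z ^ l) (∫ x, f x * z ^ L x ∂μ) := by
  have hfiber (l : ℕ) : MeasurableSet {y | L y = l} := hL (MeasurableSet.singleton l)
  have hdisj : Pairwise (Function.onFun Disjoint fun l : ℕ => {y | L y = l}) := fun l m hlm =>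
    Set.disjoint_left.2 fun y (hl : L y = l) (hm : L y = m) => hlm (hl ▸ hm)
  have hcover : ⋃ l : ℕ, {y | L y = l} = Set.univ :=
    Set.iUnion_eq_univ_iff.2 fun y => ⟨L y, rfl⟩
  have hsum := hasSum_integral_iUnion hfiber hdisj hint.integrableOn
  rw [hcover, setIntegral_univ] at hsum
  refine hsum.congr_fun fun l => ?_
  rw [← integral_mul_const]
  exact setIntegral_congr_fun (hfiber l) fun y (hy : L y = l) => by simp only [hy]

end Disintegration

lemma measurable_poissonMeasure : Measurable poissonMeasure :=
  measurable_of_measurable_measure_singleton fun m => by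
    simp only [poissonMeasure_singleton]
    fun_prop

section CreditRiskPlus

variable {n k : ℕ} {S0 : ℝ} {r0 : Fin n → ℝ} {r : Fin k → Fin n → ℝ} {α β : Fin k → ℝ}

lemma measurable_crpR (S0 : ℝ) (r0 : Fin n → ℝ) (r : Fin k → Fin n → ℝ) (i : Fin n) :
    Measurable fun s => crpR S0 r0 r s i := by
  unfold crpR
  fun_prop

lemma crpR_nonneg (hS0 : 0 ≤ S0) (hr0 : ∀ i, 0 ≤ r0 i) (hr : ∀ j i, 0 ≤ r j i)
    {s : Fin k → ℝ} (hs : ∀ j, 0 ≤ s j) (i : Fin n) : 0 ≤ crpR S0 r0 r s i :=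
  add_nonneg (mul_nonneg (hr0 i) hS0) (Finset.sum_nonneg fun j _ => mul_nonneg (hr j i) (hs j))

/-- The joint law of the independent gamma risk factors, the first marginal of `crpMeasure`. -/
def crpFactorMeasure (α β : Fin k → ℝ) : Measure (Fin k → ℝ) :=
  Measure.pi fun j => gammaMeasure (α j) (β j)⁻¹

instance instSigmaFiniteCrpFactorMeasure (α β : Fin k → ℝ) :
    SigmaFinite (crpFactorMeasure α β) := by
  unfold crpFactorMeasure
  infer_instance

lemma ae_nonneg_crpFactorMeasure (α β : Fin k → ℝ) :
    ∀ᵐ s ∂crpFactorMeasure α β, ∀ j, 0 ≤ s j :=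
  ae_all_iff.2 fun _ => Measure.tendsto_eval_ae_ae.eventually (ae_nonneg_gammaMeasure _ _)

/-- The conditional law of the default counts given the risk factors. -/
def crpKernel (S0 : ℝ) (r0 : Fin n → ℝ) (r : Fin k → Fin n → ℝ) :
    Kernel (Fin k → ℝ) (Fin n → ℕ) where
  toFun s := Measure.pi fun i => poissonMeasure (crpR S0 r0 r s i).toNNReal
  measurable' := measurable_of_measurable_measure_singleton fun y => by
    simp only [Measure.pi_singleton]
    exact Finset.measurable_prod _ fun i _ =>
      (Measure.measurable_coe (MeasurableSet.singleton _)).comp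
        (measurable_poissonMeasure.comp (measurable_crpR S0 r0 r i).real_toNNReal)

lemma crpKernel_apply (S0 : ℝ) (r0 : Fin n → ℝ) (r : Fin k → Fin n → ℝ) (s : Fin k → ℝ) :
    crpKernel S0 r0 r s = Measure.pi fun i => poissonMeasure (crpR S0 r0 r s i).toNNReal :=
  rfl

instance instIsMarkovKernelCrpKernel (S0 : ℝ) (r0 : Fin n → ℝ) (r : Fin k → Fin n → ℝ) :
    IsMarkovKernel (crpKernel S0 r0 r) :=
  ⟨fun s => by rw [crpKernel_apply]; infer_instance⟩

lemma crpMeasure_eq_compProd (S0 : ℝ) (r0 : Fin n → ℝ) (r : Fin k → Fin n → ℝ)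
    (α β : Fin k → ℝ) :
    crpMeasure S0 r0 r α β = crpFactorMeasure α β ⊗ₘ crpKernel S0 r0 r := by
  rw [crpMeasure, Measure.compProd_eq_comp_prod]
  congr with s : 1
  rw [Kernel.prod_apply, Kernel.id_apply, Measure.dirac_prod, crpKernel_apply]

lemma integrable_prod_pow_crpKernel (s : Fin k → ℝ) (w : Fin n → ℝ) :
    Integrable (fun y => ∏ h, w h ^ y h) (crpKernel S0 r0 r s) :=
  Integrable.fintype_prod fun h => integrable_pow_poissonMeasure _ (w h)

lemma integral_prod_pow_crpKernel {s : Fin k → ℝ} (hR : ∀ h, 0 ≤ crpR S0 r0 r s h)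
    (w : Fin n → ℝ) :
    ∫ y, ∏ h, w h ^ y h ∂crpKernel S0 r0 r s = exp (∑ h, crpR S0 r0 r s h * (w h - 1)) := by
  rw [crpKernel_apply, integral_fintype_prod_eq_prod (fun h (m : ℕ) => w h ^ m), exp_sum]
  simp only [integral_pow_poissonMeasure, coe_toNNReal _ (hR _)]

lemma integrable_count_mul_prod_pow_crpKernel (s : Fin k → ℝ) (w : Fin n → ℝ) (i : Fin n) :
    Integrable (fun y => (y i : ℝ) * ∏ h, w h ^ y h) (crpKernel S0 r0 r s) :=
  integrable_eval_mul_prod (f := fun h (m : ℕ) => w h ^ m) (g := fun m : ℕ => (m : ℝ))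
    (fun h => integrable_pow_poissonMeasure _ (w h))
    (integrable_natCast_mul_pow_poissonMeasure _ (w i))

lemma integral_count_mul_prod_pow_crpKernel {s : Fin k → ℝ} {i : Fin n}
    (hR : 0 ≤ crpR S0 r0 r s i) (w : Fin n → ℝ) :
    ∫ y, (y i : ℝ) * ∏ h, w h ^ y h ∂crpKernel S0 r0 r s =
      w i * crpR S0 r0 r s i * ∫ y, ∏ h, w h ^ y h ∂crpKernel S0 r0 r s :=
  integral_eval_mul_prod_of_integral_mul_eq (f := fun h (m : ℕ) => w h ^ m)
    (g := fun m : ℕ => (m : ℝ)) <| by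
      rw [integral_natCast_mul_pow_poissonMeasure, coe_toNNReal _ hR, mul_comm (w i)]

/-- The exponents `c_j` for which the conditional joint generating function of the counts at `w`
is a constant multiple of `exp (∑ j, c_j * s_j)`. -/
def crpTilt (r : Fin k → Fin n → ℝ) (w : Fin n → ℝ) (j : Fin k) : ℝ :=
  ∑ h, r j h * (w h - 1)

lemma sum_crpR_mul_sub_one (s : Fin k → ℝ) (w : Fin n → ℝ) :
    ∑ h, crpR S0 r0 r s h * (w h - 1) =
      S0 * ∑ h, r0 h * (w h - 1) + ∑ j, crpTilt r w j * s j := by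
  simp only [crpR, crpTilt, add_mul, Finset.sum_add_distrib, Finset.sum_mul, Finset.mul_sum]
  rw [Finset.sum_comm]
  congr 1
  · exact Finset.sum_congr rfl fun h _ => by ring
  · exact Finset.sum_congr rfl fun j _ => Finset.sum_congr rfl fun h _ => by ring

lemma ae_integral_prod_pow_crpKernel (hS0 : 0 ≤ S0) (hr0 : ∀ i, 0 ≤ r0 i) (hr : ∀ j i, 0 ≤ r j i)
    (α β : Fin k → ℝ) (w : Fin n → ℝ) :
    (fun s => ∫ y, ∏ h, w h ^ y h ∂crpKernel S0 r0 r s) =ᵐ[crpFactorMeasure α β]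
      fun s => exp (S0 * ∑ h, r0 h * (w h - 1)) * exp (∑ j, crpTilt r w j * s j) := by
  filter_upwards [ae_nonneg_crpFactorMeasure α β] with s hs
  rw [integral_prod_pow_crpKernel (crpR_nonneg hS0 hr0 hr hs), sum_crpR_mul_sub_one, exp_add]

lemma ae_integral_count_mul_prod_pow_crpKernel (hS0 : 0 ≤ S0) (hr0 : ∀ i, 0 ≤ r0 i)
    (hr : ∀ j i, 0 ≤ r j i) (α β : Fin k → ℝ) (w : Fin n → ℝ) (i : Fin n) :
    (fun s => ∫ y, (y i : ℝ) * ∏ h, w h ^ y h ∂crpKernel S0 r0 r s) =ᵐ[crpFactorMeasure α β]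
      fun s => w i * exp (S0 * ∑ h, r0 h * (w h - 1)) *
        (crpR S0 r0 r s i * exp (∑ j, crpTilt r w j * s j)) := by
  filter_upwards [ae_nonneg_crpFactorMeasure α β, ae_integral_prod_pow_crpKernel hS0 hr0 hr α β w]
    with s hs hpgf
  rw [integral_count_mul_prod_pow_crpKernel (crpR_nonneg hS0 hr0 hr hs i), hpgf]
  ring

variable {w : Fin n → ℝ}

lemma integrable_prod_pow_crpMeasure (hS0 : 0 ≤ S0) (hr0 : ∀ i, 0 ≤ r0 i)
    (hr : ∀ j i, 0 ≤ r j i) (hα : ∀ j, 0 < α j) (hβ : ∀ j, 0 < β j) (hw : ∀ h, 0 ≤ w h)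
    (hconv : ∀ j, crpTilt r w j < (β j)⁻¹) :
    Integrable (fun x => ∏ h, w h ^ x.2 h) (crpMeasure S0 r0 r α β) := by
  rw [crpMeasure_eq_compProd]
  refine integrable_compProd_of_nonneg
    (Measurable.of_discrete (f := fun y : Fin n → ℕ => ∏ h, w h ^ y h)
      |>.comp measurable_snd).aestronglyMeasurable
    (fun x => Finset.prod_nonneg fun h _ => pow_nonneg (hw h) _)
    (ae_of_all _ fun s => integrable_prod_pow_crpKernel s w)
    (Integrable.congr ?_ (ae_integral_prod_pow_crpKernel hS0 hr0 hr α β w).symm)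
  exact (integrable_exp_sum_pi_gammaMeasure hα (fun j => inv_pos.2 (hβ j)) hconv).const_mul _

lemma integrable_count_mul_prod_pow_crpMeasure (hS0 : 0 ≤ S0) (hr0 : ∀ i, 0 ≤ r0 i)
    (hr : ∀ j i, 0 ≤ r j i) (hα : ∀ j, 0 < α j) (hβ : ∀ j, 0 < β j) (hw : ∀ h, 0 ≤ w h)
    (hconv : ∀ j, crpTilt r w j < (β j)⁻¹) (i : Fin n) :
    Integrable (fun x => (x.2 i : ℝ) * ∏ h, w h ^ x.2 h) (crpMeasure S0 r0 r α β) := by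
  rw [crpMeasure_eq_compProd]
  refine integrable_compProd_of_nonneg
    (Measurable.of_discrete (f := fun y : Fin n → ℕ => (y i : ℝ) * ∏ h, w h ^ y h)
      |>.comp measurable_snd).aestronglyMeasurable
    (fun x => mul_nonneg (Nat.cast_nonneg _) (Finset.prod_nonneg fun h _ => pow_nonneg (hw h) _))
    (ae_of_all _ fun s => integrable_count_mul_prod_pow_crpKernel s w i)
    (Integrable.congr ?_ (ae_integral_count_mul_prod_pow_crpKernel hS0 hr0 hr α β w i).symm)
  exact (integrable_affine_mul_exp_sum_pi_gammaMeasure hα (fun j => inv_pos.2 (hβ j)) hconv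
    _ _).const_mul _

lemma integral_count_mul_prod_pow_crpMeasure (hS0 : 0 ≤ S0) (hr0 : ∀ i, 0 ≤ r0 i)
    (hr : ∀ j i, 0 ≤ r j i) (hα : ∀ j, 0 < α j) (hβ : ∀ j, 0 < β j) (hw : ∀ h, 0 ≤ w h)
    (hconv : ∀ j, crpTilt r w j < (β j)⁻¹) (i : Fin n) :
    ∫ x, (x.2 i : ℝ) * ∏ h, w h ^ x.2 h ∂crpMeasure S0 r0 r α β =
      w i * (∫ x, ∏ h, w h ^ x.2 h ∂crpMeasure S0 r0 r α β) *
        (r0 i * S0 + ∑ j, r j i * (α j / ((β j)⁻¹ - crpTilt r w j))) := by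
  set K := exp (S0 * ∑ h, r0 h * (w h - 1))
  set G := ∫ s, exp (∑ j, crpTilt r w j * s j) ∂crpFactorMeasure α β
  have hpgf : ∫ x, ∏ h, w h ^ x.2 h ∂crpMeasure S0 r0 r α β = K * G := by
    have hint := integrable_prod_pow_crpMeasure hS0 hr0 hr hα hβ hw hconv
    rw [crpMeasure_eq_compProd] at hint ⊢
    rw [Measure.integral_compProd hint,
      integral_congr_ae (ae_integral_prod_pow_crpKernel hS0 hr0 hr α β w), integral_const_mul]
  have haffine : ∫ s, crpR S0 r0 r s i * exp (∑ j, crpTilt r w j * s j) ∂crpFactorMeasure α β =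
      (r0 i * S0 + ∑ j, r j i * (α j / ((β j)⁻¹ - crpTilt r w j))) * G :=
    integral_affine_mul_exp_sum_pi_gammaMeasure hα (fun j => inv_pos.2 (hβ j)) hconv _ _
  have hint := integrable_count_mul_prod_pow_crpMeasure hS0 hr0 hr hα hβ hw hconv i
  rw [hpgf]
  rw [crpMeasure_eq_compProd] at hint ⊢
  rw [Measure.integral_compProd hint,
    integral_congr_ae (ae_integral_count_mul_prod_pow_crpKernel hS0 hr0 hr α β w i),
    integral_const_mul, haffine]
  ring

lemma pow_crpLoss (ν : Fin n → ℕ) (z : ℝ) (x : (Fin k → ℝ) × (Fin n → ℕ)) :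
    z ^ crpLoss ν x = ∏ h, (z ^ ν h) ^ x.2 h := by
  simp only [crpLoss, ← Finset.prod_pow_eq_pow_sum, pow_mul]

lemma measurable_crpLoss (ν : Fin n → ℕ) :
    Measurable (crpLoss ν : (Fin k → ℝ) × (Fin n → ℕ) → ℕ) :=
  (Measurable.of_discrete (f := fun y : Fin n → ℕ => ∑ h, ν h * y h)).comp measurable_snd

lemma sum_mul_pow_lt_of_lt_crpRadius {ν : Fin n → ℕ} (hr : ∀ j i, 0 ≤ r j i) {z : ℝ}
    (hz0 : 0 < z) (hz : z < crpRadius ν r β) (j : Fin k) :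
    ∑ h, r j h * z ^ ν h < 1 + (β j)⁻¹ := by
  have hne : {z : ℝ | 0 < z ∧ ∀ j, ∑ i, r j i * z ^ ν i < 1 + (β j)⁻¹}.Nonempty := by
    by_contra hempty
    rw [crpRadius, Set.not_nonempty_iff_eq_empty.1 hempty, Real.sSup_empty] at hz
    exact hz0.not_gt hz
  obtain ⟨u, ⟨-, hu⟩, hzu⟩ := exists_lt_of_lt_csSup hne hz
  refine (Finset.sum_le_sum fun h _ => ?_).trans_lt (hu j)
  exact mul_le_mul_of_nonneg_left (pow_le_pow_left₀ hz0.le hzu.le _) (hr j h)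

lemma crpTilt_eq_sub (r : Fin k → Fin n → ℝ) (w : Fin n → ℝ) (j : Fin k) :
    crpTilt r w j = ∑ h, r j h * w h - ∑ h, r j h := by
  simp only [crpTilt, mul_sub, mul_one, Finset.sum_sub_distrib]

theorem crp_theorem_one_general (ν : Fin n → ℕ) (hS0 : 0 ≤ S0)
    (hr0 : ∀ i, 0 ≤ r0 i) (hr : ∀ j i, 0 ≤ r j i) (hα : ∀ j, 0 < α j) (hβ : ∀ j, 0 < β j)
    (i : Fin n) {z : ℝ} (hz : 0 ≤ z)
    (hconv : ∀ j, ∑ h, r j h * z ^ ν h < ∑ h, r j h + (β j)⁻¹) :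
    Integrable (fun x => (x.2 i : ℝ) * z ^ crpLoss ν x) (crpMeasure S0 r0 r α β) ∧
    Summable (fun l : ℕ =>
      (∫ x in {y | crpLoss ν y = l}, (x.2 i : ℝ) ∂(crpMeasure S0 r0 r α β)) * z ^ l) ∧
    (∑' l : ℕ,
      (∫ x in {y | crpLoss ν y = l}, (x.2 i : ℝ) ∂(crpMeasure S0 r0 r α β)) * z ^ l)
      = ∫ x, (x.2 i : ℝ) * z ^ crpLoss ν x ∂(crpMeasure S0 r0 r α β) ∧
    ∫ x, (x.2 i : ℝ) * z ^ crpLoss ν x ∂(crpMeasure S0 r0 r α β)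
      = z ^ ν i * (∫ x, z ^ crpLoss ν x ∂(crpMeasure S0 r0 r α β)) *
        (S0 * r0 i + ∑ j, α j * β j * r j i /
          (1 + β j * ∑ h, r j h - β j * ∑ h, r j h * z ^ ν h)) := by
  have hw (h : Fin n) : 0 ≤ z ^ ν h := pow_nonneg hz _
  have htilt (j : Fin k) : crpTilt r (fun h => z ^ ν h) j < (β j)⁻¹ := by
    rw [crpTilt_eq_sub]
    exact sub_left_lt_of_lt_add (hconv j)
  have hint : Integrable (fun x => (x.2 i : ℝ) * z ^ crpLoss ν x) (crpMeasure S0 r0 r α β) := by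
    simpa only [pow_crpLoss] using
      integrable_count_mul_prod_pow_crpMeasure hS0 hr0 hr hα hβ hw htilt i
  have hsum := hasSum_setIntegral_fiber_mul_pow (measurable_crpLoss ν) hint
  refine ⟨hint, hsum.summable, hsum.tsum_eq, ?_⟩
  simp only [pow_crpLoss]
  rw [integral_count_mul_prod_pow_crpMeasure hS0 hr0 hr hα hβ hw htilt i, mul_comm (r0 i)]
  congr 2
  refine Finset.sum_congr rfl fun j _ => ?_
  have hden : 1 + β j * ∑ h, r j h - β j * ∑ h, r j h * z ^ ν h =
      β j * ((β j)⁻¹ - crpTilt r (fun h => z ^ ν h) j) := by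
    rw [crpTilt_eq_sub, mul_sub, mul_inv_cancel₀ (hβ j).ne']
    ring
  rw [hden, mul_right_comm, mul_comm _ (β j), mul_div_mul_left _ _ (hβ j).ne']
  ring

end CreditRiskPlus

/-- Theorem 1: for `0 < z < ρ_g`,
`f_i(z) = E_α[N_i z^L] = ∑_l E_α[N_i 1_{L=l}] z^l` converges and
`f_i(z) = z^{ν_i} g_α(z) (S₀ r_{0,i} + ∑_j α_j β_j r_{j,i}/(1 + β_j − β_j ∑_h r_{j,h} z^{ν_h}))`. -/
theorem crp_theorem_one {n k : ℕ} (hn : 0 < n) (hk : 0 < k)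
    (ν : Fin n → ℕ) (hν : ∀ i, 0 < ν i)
    (S0 : ℝ) (hS0 : 0 ≤ S0)
    (r0 : Fin n → ℝ) (r : Fin k → Fin n → ℝ)
    (hr0 : ∀ i, 0 ≤ r0 i) (hr : ∀ j i, 0 ≤ r j i)
    (hr0sum : ∑ i, r0 i = 1) (hrsum : ∀ j, ∑ i, r j i = 1)
    (hrpos : ∀ i, 0 < ∑ j, r j i)
    (α β : Fin k → ℝ) (hα : ∀ j, 0 < α j) (hβ : ∀ j, 0 < β j)
    (i : Fin n) (z : ℝ) (hz0 : 0 < z) (hzρ : z < crpRadius ν r β) :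
    Integrable (fun x => (x.2 i : ℝ) * z ^ crpLoss ν x) (crpMeasure S0 r0 r α β) ∧
    Summable (fun l : ℕ =>
      (∫ x in {y | crpLoss ν y = l}, (x.2 i : ℝ) ∂(crpMeasure S0 r0 r α β)) * z ^ l) ∧
    (∑' l : ℕ,
      (∫ x in {y | crpLoss ν y = l}, (x.2 i : ℝ) ∂(crpMeasure S0 r0 r α β)) * z ^ l)
      = ∫ x, (x.2 i : ℝ) * z ^ crpLoss ν x ∂(crpMeasure S0 r0 r α β) ∧
    ∫ x, (x.2 i : ℝ) * z ^ crpLoss ν x ∂(crpMeasure S0 r0 r α β)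
      = z ^ ν i * (∫ x, z ^ crpLoss ν x ∂(crpMeasure S0 r0 r α β)) *
        (S0 * r0 i +
          ∑ j, α j * β j * r j i / (1 + β j - β j * ∑ h, r j h * z ^ ν h)) := by
  simpa only [hrsum, mul_one] using crp_theorem_one_general ν hS0 hr0 hr hα hβ i hz0.le
    fun j => (sum_mul_pow_lt_of_lt_crpRadius hr hz0 hzρ j).trans_eq (by rw [hrsum])
end
end

section
/- (Remark 2 (iii).) In the CreditRisk⁺ model, fix δ ∈ (0,1) and i ∈ {1,…,n}, and let q_δ(L) be the value-at-risk of L under P_α. Then E_α[N_i | L = q_δ(L)] = 0 if and only if every n-tuple (u₁,…,u_n) of nonnegative integers with Σ_{j=1}^n ν_j u_j = q_δ(L) satisfies u_i = 0. -/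
open MeasureTheory ProbabilityTheory Real

noncomputable section

/-! The Gamma factors, and with them all the Poisson intensities, are almost surely positive, so
`P_α` charges every vector of counts, and a property of the counts holds almost surely only if it
holds for every tuple. The minimality in the definition of a quantile forces `P_α[L = q_δ(L)] > 0`,
so the conditional expectation vanishes precisely when `N_i = 0` almost surely on `{L = q_δ(L)}`,
that is, for every tuple with that loss. -/

open scoped NNReal ENNReal

section Quantile

variable {Ω : Type*} [MeasurableSpace Ω] {μ : Measure Ω}

lemma exists_le_measure_le (X : Ω → ℕ) {c : ℝ≥0∞} (hc : c < μ Set.univ) :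
    ∃ l : ℕ, c ≤ μ {ω | X ω ≤ l} := by
  have hmono : Monotone fun l : ℕ => {ω | X ω ≤ l} := fun _ _ hlm _ hω => le_trans hω hlm
  have hunion : ⋃ l : ℕ, {ω | X ω ≤ l} = Set.univ :=
    Set.iUnion_eq_univ_iff.2 fun ω => ⟨X ω, le_refl (X ω)⟩
  rw [← hunion, hmono.measure_iUnion, lt_iSup_iff] at hc
  exact hc.imp fun _ hl => hl.le

lemma measure_eq_sInf_le_measure_le_ne_zero (X : Ω → ℕ) {c : ℝ≥0∞} (hc₀ : c ≠ 0)
    (hc : c < μ Set.univ) :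
    μ {ω | X ω = sInf {l : ℕ | c ≤ μ {ω | X ω ≤ l}}} ≠ 0 := by
  set q := sInf {l : ℕ | c ≤ μ {ω | X ω ≤ l}}
  intro hnull
  have hlt : c ≤ μ {ω | X ω < q} := calc
    c ≤ μ {ω | X ω ≤ q} := Nat.sInf_mem (exists_le_measure_le X hc)
    _ ≤ μ ({ω | X ω < q} ∪ {ω | X ω = q}) :=
      measure_mono fun ω hω => (show X ω ≤ q from hω).lt_or_eq
    _ ≤ μ {ω | X ω < q} + μ {ω | X ω = q} := measure_union_le _ _
    _ = μ {ω | X ω < q} := by rw [hnull, add_zero]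
  cases hq : q with
  | zero => exact hc₀ (by simpa [hq] using hlt)
  | succ m =>
    have hm : c ≤ μ {ω | X ω ≤ m} := by simpa only [hq, Nat.lt_succ_iff] using hlt
    have hqm : q ≤ m := Nat.sInf_le hm
    lia

end Quantile

section ChargedFibers

variable {Ω E : Type*} [MeasurableSpace Ω] {μ : Measure Ω} {X : Ω → E}

lemma ae_iff_forall_of_measure_fiber_ne_zero (hX : ∀ u, μ {ω | X ω = u} ≠ 0) {p : E → Prop} :
    (∀ᵐ ω ∂μ, p (X ω)) ↔ ∀ u, p u := by
  refine ⟨fun h u => ?_, fun h => ae_of_all _ fun ω => h (X ω)⟩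
  by_contra hu
  refine hX u (measure_mono_null ?_ (ae_iff.1 h))
  rintro ω rfl
  exact hu

lemma setIntegral_preimage_eq_zero_iff (hX : ∀ u, μ {ω | X ω = u} ≠ 0) {A : Set E}
    (hA : MeasurableSet (X ⁻¹' A)) {f : E → ℝ} (hf : ∀ u ∈ A, 0 ≤ f u)
    (hint : IntegrableOn (fun ω => f (X ω)) (X ⁻¹' A) μ) :
    ∫ ω in X ⁻¹' A, f (X ω) ∂μ = 0 ↔ ∀ u ∈ A, f u = 0 := by
  have hnonneg : 0 ≤ᵐ[μ.restrict (X ⁻¹' A)] fun ω => f (X ω) :=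
    (ae_restrict_iff' hA).2 (ae_of_all _ fun ω hω => hf (X ω) hω)
  rw [setIntegral_eq_zero_iff_of_nonneg_ae hnonneg hint, Filter.EventuallyEq,
    ae_restrict_iff' hA]
  exact ae_iff_forall_of_measure_fiber_ne_zero hX (p := fun u => u ∈ A → f u = 0)

end ChargedFibers

section Counts

variable {Ω ι : Type*} [MeasurableSpace Ω] [Fintype ι] {μ : Measure Ω} {N : Ω → ι → ℕ}

lemma integrableOn_count_of_weighted_sum_eq [IsFiniteMeasure μ] (hN : Measurable N) {ν : ι → ℕ}
    {i : ι} (hνi : 0 < ν i) (q : ℕ) :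
    IntegrableOn (fun ω => (N ω i : ℝ)) {ω | ∑ j, ν j * N ω j = q} μ := by
  have hle : ∀ ω, ∑ j, ν j * N ω j = q → N ω i ≤ q := fun ω hω => calc
    N ω i ≤ ν i * N ω i := Nat.le_mul_of_pos_left _ hνi
    _ ≤ ∑ j, ν j * N ω j :=
      Finset.single_le_sum (f := fun j => ν j * N ω j) (fun _ _ => Nat.zero_le _)
        (Finset.mem_univ i)
    _ = q := hω
  refine Measure.integrableOn_of_bounded (M := q) (measure_ne_top _ _)
    (Measurable.aestronglyMeasurable (by fun_prop)) ?_
  refine (ae_restrict_iff' (measurableSet_eq_fun (by fun_prop) measurable_const)).2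
    (ae_of_all _ fun ω hω => ?_)
  simpa only [Real.norm_natCast, Nat.cast_le] using hle ω hω

lemma setIntegral_count_eq_zero_iff [IsFiniteMeasure μ] (hN : Measurable N)
    (hcharged : ∀ u, μ {ω | N ω = u} ≠ 0) {ν : ι → ℕ} {i : ι} (hνi : 0 < ν i) (q : ℕ) :
    ∫ ω in {ω | ∑ j, ν j * N ω j = q}, (N ω i : ℝ) ∂μ = 0 ↔
      ∀ u : ι → ℕ, ∑ j, ν j * u j = q → u i = 0 :=
  (setIntegral_preimage_eq_zero_iff (A := {u | ∑ j, ν j * u j = q}) (f := fun u => (u i : ℝ))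
    hcharged (hN .of_discrete) (fun _ _ => Nat.cast_nonneg _)
    (integrableOn_count_of_weighted_sum_eq hN hνi q)).trans <| by
    simp only [Set.mem_ofPred_eq, Nat.cast_eq_zero]

end Counts

section Kernels

variable {T E : Type*} [MeasurableSpace T] [MeasurableSpace E]

lemma measurable_measure_of_measurable_singleton [Countable E] [MeasurableSingletonClass E]
    {κ : T → Measure E} (hκ : ∀ u, Measurable fun t => κ t {u}) : Measurable κ := by
  refine Measure.measurable_of_measurable_coe _ fun A hA => ?_
  simp only [← Measure.tsum_indicator_apply_singleton _ A hA]
  exact Measurable.tsum fun u => by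
    by_cases hu : u ∈ A <;> simp [hu, hκ u]

lemma compProd_eq_bind_map (μ : Measure T) [SFinite μ] (κ : Kernel T E) [IsSFiniteKernel κ] :
    μ ⊗ₘ κ = μ.bind fun t => (κ t).map (Prod.mk t) := by
  rw [Measure.compProd_eq_comp_prod]
  congr with t : 1
  rw [Kernel.prod_apply, Kernel.id_apply, Measure.dirac_prod]

lemma compProd_preimage_snd_ne_zero {μ : Measure T} [SFinite μ] {κ : Kernel T E}
    [IsSFiniteKernel κ] {A : Set E} (h : ∃ᵐ t ∂μ, κ t A ≠ 0) :
    (μ ⊗ₘ κ) (Prod.snd ⁻¹' A) ≠ 0 := fun hnull =>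
  h <| (Measure.ae_ae_of_ae_compProd (measure_eq_zero_iff_ae_notMem.1 hnull)).mono fun _ ht =>
    not_not.2 (measure_eq_zero_iff_ae_notMem.2 ht)

end Kernels

section Poisson

variable {T ι : Type*} [MeasurableSpace T] [Fintype ι]

lemma poissonMeasure_singleton_ne_zero {m : ℝ≥0} (hm : 0 < m) (a : ℕ) :
    poissonMeasure m {a} ≠ 0 := fun h =>
  (poissonMeasure_real_singleton_pos a hm).ne' ((measureReal_eq_zero_iff).2 h)

lemma pi_poissonMeasure_singleton_ne_zero {m : ι → ℝ≥0} (hm : ∀ i, 0 < m i) (u : ι → ℕ) :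
    Measure.pi (fun i => poissonMeasure (m i)) {u} ≠ 0 := by
  rw [Measure.pi_singleton]
  exact Finset.prod_ne_zero_iff.2 fun i _ => poissonMeasure_singleton_ne_zero (hm i) (u i)

lemma measurable_pi_poissonMeasure {R : T → ι → ℝ≥0} (hR : Measurable R) :
    Measurable fun t => Measure.pi fun i => poissonMeasure (R t i) := by
  refine measurable_measure_of_measurable_singleton fun u => ?_
  simp only [Measure.pi_singleton, poissonMeasure_singleton]
  fun_prop

/-- The Markov kernel sending `t` to the product over `i` of the Poisson distributions with
means `R t i`, i.e. the conditional law of the default counts given the factors. -/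
def poissonPiKernel (R : T → ι → ℝ≥0) (hR : Measurable R) : Kernel T (ι → ℕ) where
  toFun t := Measure.pi fun i => poissonMeasure (R t i)
  measurable' := measurable_pi_poissonMeasure hR

instance isMarkovKernel_poissonPiKernel (R : T → ι → ℝ≥0) (hR : Measurable R) :
    IsMarkovKernel (poissonPiKernel R hR) where
  isProbabilityMeasure t :=
    inferInstanceAs (IsProbabilityMeasure (Measure.pi fun i => poissonMeasure (R t i)))

end Poisson

section Gamma

lemma ae_pos_gammaMeasure (a b : ℝ) : ∀ᵐ x ∂gammaMeasure a b, 0 < x := by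
  simp only [ae_iff, not_lt]
  change volume.withDensity (gammaPDF a b) (Set.Iic 0) = 0
  rw [withDensity_apply _ measurableSet_Iic, ← setLIntegral_congr Iio_ae_eq_Iic]
  exact lintegral_gammaPDF_of_nonpos le_rfl

variable {ι : Type*} [Fintype ι]

lemma ae_pos_pi_gammaMeasure (a b : ι → ℝ) :
    ∀ᵐ s ∂Measure.pi fun j => gammaMeasure (a j) (b j), ∀ j, 0 < s j :=
  ae_all_iff.2 fun j =>
    (Measure.quasiMeasurePreserving_eval _ j).ae (ae_pos_gammaMeasure (a j) (b j))

lemma isProbabilityMeasure_pi_gammaMeasure {a b : ι → ℝ} (ha : ∀ j, 0 < a j)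
    (hb : ∀ j, 0 < b j) : IsProbabilityMeasure (Measure.pi fun j => gammaMeasure (a j) (b j)) :=
  have := fun j => isProbabilityMeasure_gammaMeasure (ha j) (hb j)
  inferInstance

end Gamma

section CreditRisk

variable {n k : ℕ} {S0 : ℝ} {r0 : Fin n → ℝ} {r : Fin k → Fin n → ℝ} {α β : Fin k → ℝ}

lemma crpR_pos {i : Fin n} (hS0 : 0 ≤ S0) (hr0 : 0 ≤ r0 i) (hr : ∀ j, 0 ≤ r j i)
    (hrpos : 0 < ∑ j, r j i) {s : Fin k → ℝ} (hs : ∀ j, 0 < s j) : 0 < crpR S0 r0 r s i := by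
  obtain ⟨j, hj, hrj⟩ := (Finset.sum_pos_iff_of_nonneg fun j _ => hr j).1 hrpos
  exact add_pos_of_nonneg_of_pos (mul_nonneg hr0 hS0)
    (Finset.sum_pos' (fun l _ => mul_nonneg (hr l) (hs l).le) ⟨j, hj, mul_pos hrj (hs j)⟩)

lemma measurable_toNNReal_crpR (S0 : ℝ) (r0 : Fin n → ℝ) (r : Fin k → Fin n → ℝ) :
    Measurable fun s i => (crpR S0 r0 r s i).toNNReal := by
  unfold crpR
  fun_prop

lemma crpMeasure_eq_compProd_s10 (S0 : ℝ) (r0 : Fin n → ℝ) (r : Fin k → Fin n → ℝ)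
    (α β : Fin k → ℝ) :
    crpMeasure S0 r0 r α β =
      (Measure.pi fun j => gammaMeasure (α j) (β j)⁻¹) ⊗ₘ
        poissonPiKernel _ (measurable_toNNReal_crpR S0 r0 r) := by
  rw [compProd_eq_bind_map]
  rfl

lemma isProbabilityMeasure_crpMeasure (S0 : ℝ) (r0 : Fin n → ℝ) (r : Fin k → Fin n → ℝ)
    (hα : ∀ j, 0 < α j) (hβ : ∀ j, 0 < β j) :
    IsProbabilityMeasure (crpMeasure S0 r0 r α β) := by
  have := isProbabilityMeasure_pi_gammaMeasure hα fun j => inv_pos.2 (hβ j)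
  rw [crpMeasure_eq_compProd_s10]
  infer_instance

lemma crpMeasure_counts_eq_ne_zero (hS0 : 0 ≤ S0) (hr0 : ∀ i, 0 ≤ r0 i)
    (hr : ∀ j i, 0 ≤ r j i) (hrpos : ∀ i, 0 < ∑ j, r j i) (hα : ∀ j, 0 < α j)
    (hβ : ∀ j, 0 < β j) (u : Fin n → ℕ) :
    crpMeasure S0 r0 r α β {x | x.2 = u} ≠ 0 := by
  have := isProbabilityMeasure_pi_gammaMeasure hα fun j => inv_pos.2 (hβ j)
  rw [crpMeasure_eq_compProd_s10]
  refine compProd_preimage_snd_ne_zero (A := {u})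
    ((ae_pos_pi_gammaMeasure α fun j => (β j)⁻¹).mono fun s hs => ?_).frequently
  exact pi_poissonMeasure_singleton_ne_zero (fun i => Real.toNNReal_pos.2 <|
    crpR_pos hS0 (hr0 i) (fun j => hr j i) (hrpos i) hs) u

lemma measure_crpLoss_eq_crpVaR_ne_zero (P : Measure ((Fin k → ℝ) × (Fin n → ℕ)))
    [IsProbabilityMeasure P] (ν : Fin n → ℕ) {δ : ℝ} (hδ : δ ∈ Set.Ioo (0 : ℝ) 1) :
    P {x | crpLoss ν x = crpVaR P ν δ} ≠ 0 :=
  measure_eq_sInf_le_measure_le_ne_zero (crpLoss ν) (ENNReal.ofReal_pos.2 hδ.1).ne'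
    (by simpa using hδ.2)

theorem crp_zero_contribution_iff_general {ν : Fin n → ℕ} {i : Fin n} (hνi : 0 < ν i)
    (hS0 : 0 ≤ S0) (hr0 : ∀ i, 0 ≤ r0 i) (hr : ∀ j i, 0 ≤ r j i)
    (hrpos : ∀ i, 0 < ∑ j, r j i) (hα : ∀ j, 0 < α j) (hβ : ∀ j, 0 < β j) {q : ℕ}
    (hq : crpMeasure S0 r0 r α β {x | crpLoss ν x = q} ≠ 0) :
    (∫ x in {y | crpLoss ν y = q}, (x.2 i : ℝ) ∂(crpMeasure S0 r0 r α β)) /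
      (crpMeasure S0 r0 r α β {x | crpLoss ν x = q}).toReal = 0 ↔
    ∀ u : Fin n → ℕ, ∑ j, ν j * u j = q → u i = 0 := by
  have := isProbabilityMeasure_crpMeasure S0 r0 r hα hβ
  rw [div_eq_zero_iff, or_iff_left (ENNReal.toReal_ne_zero.2 ⟨hq, measure_ne_top _ _⟩)]
  exact setIntegral_count_eq_zero_iff measurable_snd
    (crpMeasure_counts_eq_ne_zero hS0 hr0 hr hrpos hα hβ) hνi q

end CreditRisk

/-- Remark 2 (iii): `E_α[N_i | L = q_δ(L)] = 0` iff every tuple of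
nonnegative integers `(u₁,…,u_n)` with `∑_j ν_j u_j = q_δ(L)` has `u_i = 0`. -/
theorem crp_zero_contribution_iff {n k : ℕ} (hn : 0 < n) (hk : 0 < k)
    (ν : Fin n → ℕ) (hν : ∀ i, 0 < ν i)
    (S0 : ℝ) (hS0 : 0 ≤ S0)
    (r0 : Fin n → ℝ) (r : Fin k → Fin n → ℝ)
    (hr0 : ∀ i, 0 ≤ r0 i) (hr : ∀ j i, 0 ≤ r j i)
    (hr0sum : ∑ i, r0 i = 1) (hrsum : ∀ j, ∑ i, r j i = 1)
    (hrpos : ∀ i, 0 < ∑ j, r j i)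
    (α β : Fin k → ℝ) (hα : ∀ j, 0 < α j) (hβ : ∀ j, 0 < β j)
    (δ : ℝ) (hδ : δ ∈ Set.Ioo (0 : ℝ) 1) (i : Fin n) :
    (∫ x in {y | crpLoss ν y = crpVaR (crpMeasure S0 r0 r α β) ν δ},
        (x.2 i : ℝ) ∂(crpMeasure S0 r0 r α β)) /
      ((crpMeasure S0 r0 r α β)
        {x | crpLoss ν x = crpVaR (crpMeasure S0 r0 r α β) ν δ}).toReal = 0 ↔
    ∀ u : Fin n → ℕ, ∑ j, ν j * u j = crpVaR (crpMeasure S0 r0 r α β) ν δ → u i = 0 := by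
  have := isProbabilityMeasure_crpMeasure S0 r0 r hα hβ
  exact crp_zero_contribution_iff_general (hν i) hS0 hr0 hr hrpos hα hβ
    (measure_crpLoss_eq_crpVaR_ne_zero _ ν hδ)
end
end
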